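/- Let (X, 𝒜) be a measurable space and φ a probability measure on X. For a bounded measurable function F : X → ℝ let μ_F denote the probability measure with density e^F / ∫ e^F dφ with respect to φ. Then for any two bounded measurable functions F, G : X → ℝ, the total variation distance satisfies ‖μ_F − μ_G‖_TV ≤ (exp(osc(F − G)) − 1)/2, where osc(H) = sup_{x,y∈X} (H(x) − H(y)). -/

import Mathlib

open MeasureTheory Real

/-- The probability measure with density `e^F / ∫ e^F dφ` with respect to `φ`. -/
noncomputable def gibbsTilt {X : Type*} [MeasurableSpace X] (φ : Measure X) (F : X → ℝ) :
    Measure X :=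
  φ.withDensity (fun x => ENNReal.ofReal (Real.exp (F x) / ∫ y, Real.exp (F y) ∂φ))

/-- The oscillation of a real-valued function: `sup_{x,y} (H x - H y)`. -/
noncomputable def osc {X : Type*} (H : X → ℝ) : ℝ :=
  sSup {r : ℝ | ∃ x y, r = H x - H y}

/-!
If `F - G` oscillates by at most `D`, the two normalised densities are within a factor `K = exp D`
of each other, so `μ ≤ K ν` and `ν ≤ K μ`. Applying the first inequality to `A` and the second to
`Aᶜ` gives `2 (μ A - ν A) ≤ (K - 1) (ν A + μ Aᶜ)`, and `ν A + μ Aᶜ ≤ 1` whenever `ν A ≤ μ A`.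
-/

open scoped NNReal

theorem sub_le_osc {X : Type*} {H : X → ℝ} {C : ℝ} (hH : ∀ x, |H x| ≤ C) (x y : X) :
    H x - H y ≤ osc H := by
  refine le_csSup ⟨C + C, ?_⟩ ⟨x, y, rfl⟩
  rintro _ ⟨u, v, rfl⟩
  linarith [le_of_abs_le (hH u), neg_le_of_abs_le (hH v)]

section MeasureComparison

variable {X : Type*} [MeasurableSpace X]

theorem measureReal_le_mul_of_le_smul {μ ν : Measure X} [IsFiniteMeasure ν] {K : ℝ≥0}
    (h : μ ≤ K • ν) (A : Set X) : μ.real A ≤ K * ν.real A := by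
  rw [← measureReal_nnreal_smul_apply]
  exact ENNReal.toReal_mono (measure_ne_top _ _) (h A)

variable {μ ν : Measure X} [IsProbabilityMeasure μ] [IsProbabilityMeasure ν] {K : ℝ≥0}

theorem one_le_of_le_smul (h : μ ≤ K • ν) : (1 : ℝ) ≤ K := by
  simpa only [probReal_univ, mul_one] using measureReal_le_mul_of_le_smul h Set.univ

theorem measureReal_sub_le_of_le_smul (hμν : μ ≤ K • ν) (hνμ : ν ≤ K • μ) {A : Set X}
    (hA : MeasurableSet A) : μ.real A - ν.real A ≤ (K - 1) / 2 := by
  have hK : (0 : ℝ) ≤ K - 1 := sub_nonneg.2 (one_le_of_le_smul hμν)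
  rcases le_total (μ.real A) (ν.real A) with hle | hge
  · linarith
  have h_set : μ.real A ≤ K * ν.real A := measureReal_le_mul_of_le_smul hμν A
  have h_compl : ν.real Aᶜ ≤ K * μ.real Aᶜ := measureReal_le_mul_of_le_smul hνμ Aᶜ
  have hμ_compl : μ.real Aᶜ = 1 - μ.real A := probReal_compl_eq_one_sub hA
  have hν_compl : ν.real Aᶜ = 1 - ν.real A := probReal_compl_eq_one_sub hA
  have h_double : 2 * (μ.real A - ν.real A) ≤ K - 1 :=
    calc 2 * (μ.real A - ν.real A)
        = (μ.real A - ν.real A) + (ν.real Aᶜ - μ.real Aᶜ) := by rw [hμ_compl, hν_compl]; ring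
      _ ≤ (K - 1) * (ν.real A + μ.real Aᶜ) := by linarith
      _ ≤ K - 1 := mul_le_of_le_one_right hK (by linarith)
  linarith

theorem abs_measureReal_sub_le_of_le_smul (hμν : μ ≤ K • ν) (hνμ : ν ≤ K • μ) {A : Set X}
    (hA : MeasurableSet A) : |μ.real A - ν.real A| ≤ (K - 1) / 2 :=
  abs_sub_le_iff.2
    ⟨measureReal_sub_le_of_le_smul hμν hνμ hA, measureReal_sub_le_of_le_smul hνμ hμν hA⟩

end MeasureComparison

section Tilting

variable {X : Type*} [MeasurableSpace X] {φ : Measure X} {F G : X → ℝ}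

theorem integrable_exp_of_le [IsFiniteMeasure φ] {C : ℝ} (hF : AEMeasurable F φ)
    (hFC : ∀ᵐ x ∂φ, F x ≤ C) : Integrable (fun x => exp (F x)) φ := by
  simpa only [one_mul] using ProbabilityTheory.integrable_exp_mul_of_le 1 C zero_le_one hF hFC

variable [NeZero φ]

theorem isProbabilityMeasure_gibbsTilt (hF : Integrable (fun x => exp (F x)) φ) :
    IsProbabilityMeasure (gibbsTilt φ F) :=
  isProbabilityMeasure_tilted hF

theorem exp_div_integral_exp_le (hF : Integrable (fun x => exp (F x)) φ)
    (hG : Integrable (fun x => exp (G x)) φ) {D : ℝ} {x : X}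
    (hD : ∀ y, (F x - G x) - (F y - G y) ≤ D) :
    exp (F x) / ∫ y, exp (F y) ∂φ ≤ exp D * (exp (G x) / ∫ y, exp (G y) ∂φ) := by
  rw [← mul_div_assoc, div_le_div_iff₀ (integral_exp_pos hF) (integral_exp_pos hG),
    ← integral_const_mul, ← integral_const_mul]
  refine integral_mono (hG.const_mul _) (hF.const_mul _) fun y => ?_
  simp only [← exp_add]
  exact exp_le_exp.2 (by linarith [hD y])

theorem gibbsTilt_le_smul (hF : Integrable (fun x => exp (F x)) φ)
    (hG : Integrable (fun x => exp (G x)) φ) {D : ℝ}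
    (hD : ∀ x y, (F x - G x) - (F y - G y) ≤ D) :
    gibbsTilt φ F ≤ (exp D).toNNReal • gibbsTilt φ G := by
  change _ ≤ ENNReal.ofReal (exp D) • gibbsTilt φ G
  rw [gibbsTilt, gibbsTilt, ← withDensity_smul' _ _ ENNReal.ofReal_ne_top]
  refine withDensity_mono (.of_forall fun x => ?_)
  rw [Pi.smul_apply, smul_eq_mul, ← ENNReal.ofReal_mul (exp_nonneg D)]
  exact ENNReal.ofReal_le_ofReal (exp_div_integral_exp_le hF hG (hD x))

theorem tv_bound_of_tilted_densities_general (hF : Integrable (fun x => exp (F x)) φ)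
    (hG : Integrable (fun x => exp (G x)) φ) {C : ℝ} (hFG : ∀ x, |F x - G x| ≤ C)
    {A : Set X} (hA : MeasurableSet A) :
    |(gibbsTilt φ F A).toReal - (gibbsTilt φ G A).toReal| ≤
      (exp (osc (fun x => F x - G x)) - 1) / 2 := by
  have := isProbabilityMeasure_gibbsTilt hF
  have := isProbabilityMeasure_gibbsTilt hG
  have hosc : ∀ x y, (F x - G x) - (F y - G y) ≤ osc (fun x => F x - G x) := sub_le_osc hFG
  have hFG_le := gibbsTilt_le_smul hF hG hosc
  have hGF_le := gibbsTilt_le_smul hG hF fun x y => by linarith [hosc y x]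
  simpa only [coe_toNNReal _ (exp_nonneg _), Measure.real] using
    abs_measureReal_sub_le_of_le_smul hFG_le hGF_le hA

end Tilting

theorem tv_bound_of_tilted_densities
    {X : Type*} [MeasurableSpace X] (φ : Measure X) [IsProbabilityMeasure φ]
    (F G : X → ℝ) (hFmeas : Measurable F) (hGmeas : Measurable G)
    (CF CG : ℝ) (hFbd : ∀ x, |F x| ≤ CF) (hGbd : ∀ x, |G x| ≤ CG) :
    ∀ A : Set X, MeasurableSet A →
      |((gibbsTilt φ F) A).toReal - ((gibbsTilt φ G) A).toReal| ≤
        (Real.exp (osc (fun x => F x - G x)) - 1) / 2 := by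
  have hF : Integrable (fun x => exp (F x)) φ :=
    integrable_exp_of_le hFmeas.aemeasurable (.of_forall fun x => le_of_abs_le (hFbd x))
  have hG : Integrable (fun x => exp (G x)) φ :=
    integrable_exp_of_le hGmeas.aemeasurable (.of_forall fun x => le_of_abs_le (hGbd x))
  exact fun _ => tv_bound_of_tilted_densities_general hF hG fun x =>
    (abs_sub _ _).trans (add_le_add (hFbd x) (hGbd x))
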